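/- Assume conditions (A) and (B). Then there exist constants λ ≥ 0 and N ≥ 1 such that for every k ≥ N, every t ≥ 0 and every z ∈ [0,1], the iterated generating function satisfies z^{e^{λt}} ≤ F_k(z,t) ≤ 1, where F_k(z,t) = g_k^{∘⌊γ_k t⌋}(z). -/

import Mathlib

open Filter Set

/-- The probability generating function of a distribution `p` on `ℕ`. -/
noncomputable def pgf (p : ℕ → ℝ) (z : ℝ) : ℝ := ∑' j, p j * z ^ j

open scoped Topology

/-! A bound `γ (z - g z) ≤ L (1 - z)` near `z = 1` says that the mean `g' 1` of the distribution
is at most `a = 1 + L / γ`, and Jensen's inequality for the convex function `x ↦ z ^ x` then gives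
`z ^ a ≤ g z` on `[0,1]`. Iterating `n = ⌊γ t⌋` times raises `z` to the power `a ^ n`, and
`(1 + L / γ) ^ ⌊γ t⌋ ≤ exp (L t)`. -/

section RealInequalities

lemma rpow_mul_one_add_log_mul_sub_le_rpow {z : ℝ} (hz : 0 < z) (m x : ℝ) :
    z ^ m * (1 + Real.log z * (x - m)) ≤ z ^ x :=
  calc z ^ m * (1 + Real.log z * (x - m))
      ≤ z ^ m * z ^ (x - m) := by
        rw [Real.rpow_def_of_pos hz (x - m), add_comm]
        gcongr
        exact Real.add_one_le_exp _
    _ = z ^ x := by rw [← Real.rpow_add hz, add_sub_cancel]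

lemma rpow_pow_le_iterate {f : ℝ → ℝ} {a : ℝ} (ha : 0 ≤ a)
    (hmaps : MapsTo f (Icc 0 1) (Icc 0 1)) (hf : ∀ z ∈ Icc (0 : ℝ) 1, z ^ a ≤ f z)
    {z : ℝ} (hz : z ∈ Icc (0 : ℝ) 1) (n : ℕ) : z ^ a ^ n ≤ f^[n] z := by
  induction n with
  | zero => simp
  | succ n ih =>
    calc z ^ a ^ (n + 1) = (z ^ a ^ n) ^ a := by rw [pow_succ, Real.rpow_mul hz.1]
      _ ≤ (f^[n] z) ^ a := Real.rpow_le_rpow (Real.rpow_nonneg hz.1 _) ih ha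
      _ ≤ f (f^[n] z) := hf _ (hmaps.iterate n hz)
      _ = f^[n + 1] z := (Function.iterate_succ_apply' f n z).symm

lemma one_add_div_pow_floor_le_exp {L γ t : ℝ} (hL : 0 ≤ L) (hγ : 0 < γ) (ht : 0 ≤ t) :
    (1 + L / γ) ^ ⌊γ * t⌋₊ ≤ Real.exp (L * t) :=
  calc (1 + L / γ) ^ ⌊γ * t⌋₊
      ≤ Real.exp (L / γ) ^ ⌊γ * t⌋₊ := by
        gcongr
        rw [add_comm]
        exact Real.add_one_le_exp _
    _ = Real.exp (⌊γ * t⌋₊ * (L / γ)) := (Real.exp_nat_mul _ _).symm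
    _ ≤ Real.exp (γ * t * (L / γ)) := by
        gcongr
        exact Nat.floor_le (by positivity)
    _ = Real.exp (L * t) := by
        congr 1
        field_simp

end RealInequalities

section Pgf

variable {p : ℕ → ℝ}

lemma hasSum_pgf (hp : Summable p) {z : ℝ} (hz : |z| ≤ 1) :
    HasSum (fun j => p j * z ^ j) (pgf p z) := by
  refine (Summable.of_norm_bounded hp.norm fun j => ?_).hasSum
  rw [norm_mul, norm_pow]
  exact mul_le_of_le_one_right (norm_nonneg _) (pow_le_one₀ (norm_nonneg _) hz)

lemma pgf_one {c : ℝ} (hp : HasSum p c) : pgf p 1 = c := by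
  simp [pgf, hp.tsum_eq]

lemma pgf_nonneg (hp_nonneg : ∀ j, 0 ≤ p j) {z : ℝ} (hz : 0 ≤ z) : 0 ≤ pgf p z :=
  tsum_nonneg fun j => mul_nonneg (hp_nonneg j) (pow_nonneg hz j)

lemma pgf_le_pgf_one (hp_nonneg : ∀ j, 0 ≤ p j) (hp : Summable p) {z : ℝ}
    (hz : z ∈ Icc (0 : ℝ) 1) : pgf p z ≤ pgf p 1 := by
  refine hasSum_le (fun j => ?_) (hasSum_pgf hp ((abs_of_nonneg hz.1).trans_le hz.2))
    (hasSum_pgf hp abs_one.le)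
  exact mul_le_mul_of_nonneg_left (pow_le_pow_left₀ hz.1 hz.2 j) (hp_nonneg j)

lemma mapsTo_pgf_Icc (hp_nonneg : ∀ j, 0 ≤ p j) (hp_sum : HasSum p 1) :
    MapsTo (pgf p) (Icc 0 1) (Icc 0 1) := fun _ hz =>
  ⟨pgf_nonneg hp_nonneg hz.1,
    (pgf_le_pgf_one hp_nonneg hp_sum.summable hz).trans_eq (pgf_one hp_sum)⟩

lemma sum_mul_one_sub_pow_le_pgf_one_sub_pgf (hp_nonneg : ∀ j, 0 ≤ p j) (hp : Summable p) {z : ℝ}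
    (hz : z ∈ Icc (0 : ℝ) 1) (s : Finset ℕ) :
    ∑ j ∈ s, p j * (1 - z ^ j) ≤ pgf p 1 - pgf p z := by
  have hsum : HasSum (fun j => p j * (1 - z ^ j)) (pgf p 1 - pgf p z) := by
    simpa only [one_pow, mul_sub] using
      (hasSum_pgf hp abs_one.le).sub (hasSum_pgf hp ((abs_of_nonneg hz.1).trans_le hz.2))
  exact sum_le_hasSum s
    (fun j _ => mul_nonneg (hp_nonneg j) (sub_nonneg.2 (pow_le_one₀ hz.1 hz.2))) hsum

lemma sum_mul_cast_le_of_pgf_one_sub_pgf_le (hp_nonneg : ∀ j, 0 ≤ p j) (hp : Summable p) {a : ℝ}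
    (ha : ∀ᶠ z in 𝓝[<] 1, pgf p 1 - pgf p z ≤ a * (1 - z)) (s : Finset ℕ) :
    ∑ j ∈ s, p j * j ≤ a := by
  have hderiv : HasDerivAt (fun z : ℝ => ∑ j ∈ s, p j * z ^ j) (∑ j ∈ s, p j * j) 1 := by
    simpa using HasDerivAt.fun_sum fun j (_ : j ∈ s) => (hasDerivAt_pow j (1 : ℝ)).const_mul (p j)
  have hslope := (hasDerivWithinAt_iff_tendsto_slope' self_notMem_Iio).1
    (hderiv.hasDerivWithinAt (s := Iio 1))
  refine le_of_tendsto hslope ?_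
  filter_upwards [ha, Ioo_mem_nhdsLT zero_lt_one] with z hza hz
  have hpartial : ∑ j ∈ s, p j * 1 ^ j - ∑ j ∈ s, p j * z ^ j ≤ a * (1 - z) := by
    rw [← Finset.sum_sub_distrib]
    simp only [one_pow, ← mul_sub]
    exact (sum_mul_one_sub_pow_le_pgf_one_sub_pgf hp_nonneg hp (Ioo_subset_Icc_self hz) s).trans hza
  rw [slope_comm, slope_def_field, div_le_iff₀ (sub_pos.2 hz.2)]
  exact hpartial

lemma exists_hasSum_mul_cast_le_of_pgf_one_sub_pgf_le (hp_nonneg : ∀ j, 0 ≤ p j) (hp : Summable p)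
    {a : ℝ} (ha : ∀ᶠ z in 𝓝[<] 1, pgf p 1 - pgf p z ≤ a * (1 - z)) :
    ∃ m ≤ a, HasSum (fun j => p j * j) m := by
  have hterm : 0 ≤ fun j => p j * j := fun j => mul_nonneg (hp_nonneg j) j.cast_nonneg
  have hsum := sum_mul_cast_le_of_pgf_one_sub_pgf_le hp_nonneg hp ha
  exact ⟨_, Real.tsum_le_of_sum_le hterm hsum, (summable_of_sum_le hterm hsum).hasSum⟩

lemma rpow_le_pgf_of_hasSum_mul_cast (hp_nonneg : ∀ j, 0 ≤ p j) (hp_sum : HasSum p 1) {m : ℝ}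
    (hm : HasSum (fun j => p j * j) m) {z : ℝ} (hz : z ∈ Ioc (0 : ℝ) 1) : z ^ m ≤ pgf p z := by
  -- Average over `p` the tangent line at `m` of the convex function `x ↦ z ^ x`.
  have htangent : HasSum (fun j : ℕ => p j * (z ^ m * (1 + Real.log z * (j - m)))) (z ^ m) := by
    convert! (hp_sum.mul_left (z ^ m * (1 - Real.log z * m))).add
      (hm.mul_left (z ^ m * Real.log z)) using 1
    · ext j
      ring
    · ring
  refine hasSum_le (fun j => ?_) htangent
    (hasSum_pgf hp_sum.summable ((abs_of_nonneg hz.1.le).trans_le hz.2))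
  gcongr
  · exact hp_nonneg j
  · simpa only [Real.rpow_natCast] using rpow_mul_one_add_log_mul_sub_le_rpow hz.1 m j

lemma rpow_le_pgf_of_one_sub_pgf_le (hp_nonneg : ∀ j, 0 ≤ p j) (hp_sum : HasSum p 1) {a : ℝ}
    (ha_pos : 0 < a) (ha : ∀ᶠ z in 𝓝[<] 1, 1 - pgf p z ≤ a * (1 - z)) {z : ℝ}
    (hz : z ∈ Icc (0 : ℝ) 1) : z ^ a ≤ pgf p z := by
  obtain rfl | hz_pos := hz.1.eq_or_lt
  · rw [Real.zero_rpow ha_pos.ne']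
    exact pgf_nonneg hp_nonneg le_rfl
  obtain ⟨m, hma, hm⟩ := exists_hasSum_mul_cast_le_of_pgf_one_sub_pgf_le hp_nonneg hp_sum.summable
    (by rwa [pgf_one hp_sum])
  exact (Real.rpow_le_rpow_of_exponent_ge hz_pos hz.2 hma).trans
    (rpow_le_pgf_of_hasSum_mul_cast hp_nonneg hp_sum hm ⟨hz_pos, hz.2⟩)

lemma eventually_mul_sub_pgf_le_of_lipschitzOnWith (hp_sum : HasSum p 1) {γ : ℝ} {L : NNReal}
    (hLip : LipschitzOnWith L (fun z => γ * (pgf p z - z)) (Icc (0 : ℝ) 1)) :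
    ∀ᶠ z in 𝓝[<] 1, γ * (z - pgf p z) ≤ L * (1 - z) := by
  filter_upwards [Ioo_mem_nhdsLT zero_lt_one] with z hz
  calc γ * (z - pgf p z) = γ * (pgf p 1 - 1) - γ * (pgf p z - z) := by
        rw [pgf_one hp_sum]
        ring
    _ ≤ dist (γ * (pgf p 1 - 1)) (γ * (pgf p z - z)) := le_abs_self _
    _ ≤ L * dist 1 z :=
      hLip.dist_le_mul 1 (right_mem_Icc.2 zero_le_one) z (Ioo_subset_Icc_self hz)
    _ = L * (1 - z) := by rw [Real.dist_eq, abs_of_pos (sub_pos.2 hz.2)]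

end Pgf

theorem iterated_pgf_bounds_general {p : ℕ → ℝ} (hp_nonneg : ∀ j, 0 ≤ p j) (hp_sum : HasSum p 1)
    {γ L : ℝ} (hγ : 0 < γ) (hL : 0 ≤ L)
    (hdrift : ∀ᶠ z in 𝓝[<] 1, γ * (z - pgf p z) ≤ L * (1 - z))
    {t : ℝ} (ht : 0 ≤ t) {z : ℝ} (hz : z ∈ Icc (0 : ℝ) 1) :
    z ^ Real.exp (L * t) ≤ (pgf p)^[⌊γ * t⌋₊] z ∧ (pgf p)^[⌊γ * t⌋₊] z ≤ 1 := by
  have hmaps := mapsTo_pgf_Icc hp_nonneg hp_sum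
  have ha_pos : 0 < 1 + L / γ := by positivity
  have hgap : ∀ᶠ w in 𝓝[<] 1, 1 - pgf p w ≤ (1 + L / γ) * (1 - w) := by
    filter_upwards [hdrift] with w hw
    have : w - pgf p w ≤ L / γ * (1 - w) := by
      rwa [div_mul_eq_mul_div, le_div_iff₀' hγ]
    linarith
  have hlower : ∀ w ∈ Icc (0 : ℝ) 1, w ^ (1 + L / γ) ≤ pgf p w := fun w hw =>
    rpow_le_pgf_of_one_sub_pgf_le hp_nonneg hp_sum ha_pos hgap hw
  refine ⟨?_, (hmaps.iterate _ hz).2⟩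
  calc z ^ Real.exp (L * t)
      ≤ z ^ (1 + L / γ) ^ ⌊γ * t⌋₊ := Real.rpow_le_rpow_of_exponent_ge' hz.1 hz.2
        (by positivity) (one_add_div_pow_floor_le_exp hL hγ ht)
    _ ≤ (pgf p)^[⌊γ * t⌋₊] z := rpow_pow_le_iterate ha_pos.le hmaps hlower hz _

/-- Under conditions (A) and (B) there are constants `λ ≥ 0` and `N ≥ 1`
such that for all `k ≥ N`, `t ≥ 0` and `z ∈ [0,1]`,
`z ^ (exp (λ t)) ≤ F_k(z,t) ≤ 1`, where `F_k(z,t) = g_k^{∘⌊γ_k t⌋}(z)`. -/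
theorem iterated_pgf_bounds
    (p : ℕ → ℕ → ℝ) (γ : ℕ → ℝ) (u : ℝ → ℝ)
    (hp_nonneg : ∀ k j, 0 ≤ p k j)
    (hp_sum : ∀ k, HasSum (p k) 1)
    (hγ_pos : ∀ k, 0 < γ k)
    -- Condition (A)
    (hA : Tendsto γ atTop atTop)
    -- Condition (B)
    (hLip : ∃ L : NNReal, ∀ k,
      LipschitzOnWith L (fun z => γ k * (pgf (p k) z - z)) (Icc (0:ℝ) 1))
    (hu_cont : ContinuousOn u (Icc (0:ℝ) 1))
    (hconv : ∀ z ∈ Icc (0:ℝ) 1,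
      Tendsto (fun k => γ k * (pgf (p k) z - z)) atTop (nhds (u z))) :
    ∃ (lam : ℝ) (N : ℕ), 0 ≤ lam ∧ 1 ≤ N ∧
      ∀ k, N ≤ k → ∀ t : ℝ, 0 ≤ t → ∀ z ∈ Icc (0:ℝ) 1,
        z ^ Real.exp (lam * t) ≤ (pgf (p k))^[⌊γ k * t⌋₊] z ∧
        (pgf (p k))^[⌊γ k * t⌋₊] z ≤ 1 := by
  obtain ⟨L, hL⟩ := hLip
  exact ⟨L, 1, L.2, le_rfl, fun k _ t ht z hz =>
    iterated_pgf_bounds_general (hp_nonneg k) (hp_sum k) (hγ_pos k) L.2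
      (eventually_mul_sub_pgf_le_of_lipschitzOnWith (hp_sum k) (hL k)) ht hz⟩
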